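/- Let φ̂ : [0,∞) → ℝ be Borel measurable with 2π ∫₀^∞ r³ φ̂(r)² dr = 1, let λ ∈ {0, −1, +1}, and let ψ ∈ C²_c(ℝ³). Then for all v, v_* ∈ ℝ³ with v ≠ v_* and all ε > 0, |L^ε_λ[ψ](v, v_*)| ≤ 16 ‖D²ψ‖_∞ / |v − v_*|, and also |L[ψ](v, v_*)| ≤ 16 ‖D²ψ‖_∞ / |v − v_*|. -/

import Mathlib

/-!
Write `z = v - v_*` and `p = (z·ω)ω`, so that a collision replaces `(v, v_*)` by `(v - p, v_* + p)`.
The points `p` form the sphere with diameter `[0, z]`. The reflection `R` in the line `ℝz` preserves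
the surface measure and the kernel, and it replaces `p` by `Rp`, where `p + Rp` is parallel to `z`
and has norm `2|p|²/|z|`. In the sum of the increments of `ψ` for `p` and `Rp` the first-order
Taylor terms are therefore at most `|∇ψ(v) - ∇ψ(v_*)| |p + Rp| ≤ 2‖D²ψ‖_∞ |p|²`, and the sum is at
most `6‖D²ψ‖_∞ |p|²`. Exchanging the two outgoing particles replaces `p` by `z - p`, which gives the
same bound with `|z - p|²`. By Archimedes' theorem `z·ω` is uniformly distributed on `[-|z|, |z|]`,
and the quarter turn `ρ ↦ √(|z|² - ρ²)` preserves `ρ dρ`, so both parts of the kernel contribute at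
most a multiple of `|z|⁻¹ ∫₀^∞ r³ φ̂(r)² dr`, independently of `ε`.

For the Landau kernel, the divergence of the radial correction is computed explicitly; all terms are
controlled by `D²ψ` because `∇ψ(v) - ∇ψ(v_*)` is Lipschitz in `v` and vanishes at `v_*`.
-/

open MeasureTheory Real Filter
open scoped RealInnerProductSpace Topology

noncomputable section

abbrev E3 := EuclideanSpace ℝ (Fin 3)

/-- Post-collisional velocity `v' = v − ((v−v_*)·ω)ω`. -/
noncomputable def vPost (v w ω : E3) : E3 := v - ⟪v - w, ω⟫ • ω

/-- Post-collisional velocity `v'_* = v_* + ((v−v_*)·ω)ω`. -/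
noncomputable def vPostStar (v w ω : E3) : E3 := w + ⟪v - w, ω⟫ • ω

/-- The quantum collision kernel `B^ε_λ(v−v_*, ω)` (Maxwell–Boltzmann case for `λ = 0`,
Fermi–Dirac/Bose–Einstein case for `λ = ∓1`). -/
noncomputable def Bker (φh : ℝ → ℝ) (lam ε : ℝ) (v w ω : E3) : ℝ :=
  if lam = 0 then
    (|⟪v - w, ω⟫| / ε ^ 4) *
      ((φh (‖v - vPost v w ω‖ / ε)) ^ 2 + (φh (‖v - vPostStar v w ω‖ / ε)) ^ 2)
  else
    (|⟪v - w, ω⟫| / ε ^ 4) *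
      (φh (‖v - vPost v w ω‖ / ε) + lam * φh (‖v - vPostStar v w ω‖ / ε)) ^ 2

/-- `L^ε_λ[ψ](v,v_*) = (1/2) ∫_{S²} B^ε_λ(v−v_*,ω)(ψ(v')+ψ(v'_*)−ψ(v)−ψ(v_*)) dω`,
where `dω` is the surface measure on the unit sphere (total mass `4π`). -/
noncomputable def Leps (φh : ℝ → ℝ) (lam ε : ℝ) (ψ : E3 → ℝ) (v w : E3) : ℝ :=
  (1 / 2) * ∫ ω : Metric.sphere (0 : E3) 1,
      Bker φh lam ε v w (ω : E3) *
        (ψ (vPost v w (ω : E3)) + ψ (vPostStar v w (ω : E3)) - ψ v - ψ w)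
    ∂((volume : Measure E3).toSphere)

/-- The projection `Π(z)u = u − (z·u/|z|²) z` onto `{z}^⊥`. -/
noncomputable def projPerp (z u : E3) : E3 := u - (⟪z, u⟫ / ‖z‖ ^ 2) • z

/-- The vector field `(v, v_*) ↦ Π(v−v_*)(∇ψ(v) − ∇ψ(v_*))`. -/
noncomputable def landauVF (ψ : E3 → ℝ) (v w : E3) : E3 :=
  projPerp (v - w) (gradient ψ v - gradient ψ w)

/-- The Landau kernel
`L[ψ](v,v_*) = (1/(2|v−v_*|)) (∇_v − ∇_{v_*}) · [Π(v−v_*)(∇ψ(v) − ∇ψ(v_*))]`. -/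
noncomputable def Llandau (ψ : E3 → ℝ) (v w : E3) : ℝ :=
  (1 / (2 * ‖v - w‖)) * ∑ i : Fin 3,
    (fderiv ℝ (fun u => landauVF ψ u w i) v (EuclideanSpace.single i 1) -
      fderiv ℝ (fun u => landauVF ψ v u i) w (EuclideanSpace.single i 1))


/-- `‖D²ψ‖_∞ = sup_u |D²ψ(u)|`. -/
noncomputable def hessSupNorm (ψ : E3 → ℝ) : ℝ :=
  ⨆ u : E3, ‖iteratedFDeriv ℝ 2 ψ u‖

open scoped ENNReal NNReal Pointwise

/-! ### Second-order estimates -/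

section Calculus

variable {E F : Type*} [NormedAddCommGroup E] [NormedSpace ℝ E] [NormedAddCommGroup F]
  [NormedSpace ℝ F]

theorem norm_sub_sub_fderiv_le_of_lipschitzWith {f : E → F} {K : ℝ≥0} (hf : Differentiable ℝ f)
    (hK : LipschitzWith K (fderiv ℝ f)) (x h : E) :
    ‖f (x + h) - f x - fderiv ℝ f x h‖ ≤ K * ‖h‖ ^ 2 := by
  have hbound (y : E) (hy : y ∈ segment ℝ x (x + h)) :
      ‖fderiv ℝ f y - fderiv ℝ f x‖ ≤ K * ‖h‖ := by
    refine (hK.norm_sub_le y x).trans ?_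
    gcongr
    simpa using norm_sub_le_of_mem_segment hy
  simpa [mul_assoc, sq] using (convex_segment x (x + h)).norm_image_sub_le_of_norm_fderiv_le'
    (fun y _ => hf y) hbound (left_mem_segment ℝ x (x + h)) (right_mem_segment ℝ x (x + h))

end Calculus

section HessSupNorm

variable {ψ : E3 → ℝ}

theorem hessSupNorm_nonneg (ψ : E3 → ℝ) : 0 ≤ hessSupNorm ψ :=
  Real.iSup_nonneg fun _ => norm_nonneg _

theorem bddAbove_range_norm_iteratedFDeriv (hψ : ContDiff ℝ 2 ψ) (hsupp : HasCompactSupport ψ) :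
    BddAbove (Set.range fun u => ‖iteratedFDeriv ℝ 2 ψ u‖) := by
  obtain ⟨C, hC⟩ := (hsupp.iteratedFDeriv (𝕜 := ℝ) 2).exists_bound_of_continuous
    (hψ.continuous_iteratedFDeriv le_rfl)
  exact ⟨C, Set.forall_mem_range.2 hC⟩

theorem lipschitzWith_fderiv_hessSupNorm (hψ : ContDiff ℝ 2 ψ)
    (hbdd : BddAbove (Set.range fun u => ‖iteratedFDeriv ℝ 2 ψ u‖)) :
    LipschitzWith ⟨hessSupNorm ψ, hessSupNorm_nonneg ψ⟩ (fderiv ℝ ψ) := by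
  refine lipschitzWith_of_nnnorm_fderiv_le (𝕜 := ℝ)
    ((hψ.fderiv_right (m := 1) (by norm_num)).differentiable one_ne_zero) fun u => ?_
  change ‖fderiv ℝ (fderiv ℝ ψ) u‖ ≤ hessSupNorm ψ
  rw [← norm_iteratedFDeriv_one, norm_iteratedFDeriv_fderiv]
  exact le_ciSup hbdd u

end HessSupNorm

/-! ### Changes of variables -/

theorem lintegral_image_const_mul {c : ℝ} (hc : c ≠ 0) {s : Set ℝ} (hs : MeasurableSet s)
    (f : ℝ → ℝ≥0∞) :
    ∫⁻ y in (fun x => c * x) '' s, f y = ENNReal.ofReal |c| * ∫⁻ x in s, f (c * x) := by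
  rw [← lintegral_const_mul' _ _ ENNReal.ofReal_ne_top]
  exact lintegral_image_eq_lintegral_abs_deriv_mul hs
    (fun x _ => by simpa using (hasDerivWithinAt_id x s).const_mul c)
    (mul_right_injective₀ hc).injOn f

theorem lintegral_Ioo_neg_abs {r : ℝ} (hr : 0 < r) (f : ℝ → ℝ≥0∞) :
    ∫⁻ t in Set.Ioo (-r) r, f |t| = 2 * ∫⁻ t in Set.Ioo 0 r, f t := by
  have hpos : ∫⁻ t in Set.Ioo 0 r, f |t| = ∫⁻ t in Set.Ioo 0 r, f t :=
    setLIntegral_congr_fun measurableSet_Ioo fun t ht => by rw [abs_of_pos ht.1]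
  have hneg : ∫⁻ t in Set.Ioc (-r) 0, f |t| = ∫⁻ t in Set.Ioo 0 r, f t := by
    have himage : (fun x => -1 * x) '' Set.Ioo 0 r = Set.Ioo (-r) 0 := by simp
    rw [← setLIntegral_congr Ioo_ae_eq_Ioc, ← himage,
      lintegral_image_const_mul (by norm_num) measurableSet_Ioo, ← hpos]
    simp
  rw [← Set.Ioc_union_Ioo_eq_Ioo (neg_nonpos.2 hr.le) hr,
    lintegral_union measurableSet_Ioo (Set.disjoint_left.2 fun _ h h' => h'.1.not_ge h.2),
    hneg, hpos, two_mul]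

theorem lintegral_Ioi_comp_sq_sub_sq {c : ℝ} (hc : 0 ≤ c) (f : ℝ → ℝ≥0∞) :
    ∫⁻ n in Set.Ioi c, ENNReal.ofReal (2 * n) * f (n ^ 2 - c ^ 2) = ∫⁻ s in Set.Ioi 0, f s := by
  have himage : (fun n => n ^ 2 - c ^ 2) '' Set.Ioi c = Set.Ioi 0 := by
    ext s
    constructor
    · rintro ⟨n, hn, rfl⟩
      exact sub_pos.2 (pow_lt_pow_left₀ hn hc two_ne_zero)
    · intro (hs : 0 < s)
      exact ⟨√(s + c ^ 2), lt_sqrt_of_sq_lt (by linarith), by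
        simp only [sq_sqrt (by positivity : 0 ≤ s + c ^ 2), add_sub_cancel_right]⟩
  rw [← himage, lintegral_image_eq_lintegral_abs_deriv_mul measurableSet_Ioi
    (f' := fun n => 2 * n)
    (fun n _ => by simpa using (hasDerivAt_pow 2 n).hasDerivWithinAt.sub_const (c ^ 2))]
  · exact setLIntegral_congr_fun measurableSet_Ioi fun n (hn : c < n) => by
      rw [abs_of_pos (by linarith)]
  · intro m (hm : c < m) n (hn : c < n) h
    exact (pow_left_inj₀ (by linarith) (by linarith) two_ne_zero).1 (sub_left_injective h)

theorem lintegral_Ioo_mul_comp_sqrt_sq_sub_sq (r : ℝ) (f : ℝ → ℝ≥0∞) :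
    ∫⁻ t in Set.Ioo 0 r, ENNReal.ofReal t * f √(r ^ 2 - t ^ 2) =
      ∫⁻ t in Set.Ioo 0 r, ENNReal.ofReal t * f t := by
  have hpos {t : ℝ} (ht : t ∈ Set.Ioo 0 r) : 0 < r ^ 2 - t ^ 2 :=
    sub_pos.2 (pow_lt_pow_left₀ ht.2 ht.1.le two_ne_zero)
  have hmaps {t : ℝ} (ht : t ∈ Set.Ioo 0 r) : √(r ^ 2 - t ^ 2) ∈ Set.Ioo 0 r :=
    ⟨sqrt_pos.2 (hpos ht), (sqrt_lt' (ht.1.trans ht.2)).2 (by nlinarith [ht.1])⟩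
  have hinvol {t : ℝ} (ht : t ∈ Set.Ioo 0 r) : √(r ^ 2 - √(r ^ 2 - t ^ 2) ^ 2) = t := by
    rw [sq_sqrt (hpos ht).le, sub_sub_cancel, sqrt_sq ht.1.le]
  have himage : (fun t => √(r ^ 2 - t ^ 2)) '' Set.Ioo 0 r = Set.Ioo 0 r :=
    Set.Subset.antisymm (Set.image_subset_iff.2 fun _ => hmaps)
      fun t ht => ⟨_, hmaps ht, hinvol ht⟩
  have hderiv (t : ℝ) (ht : t ∈ Set.Ioo 0 r) :
      HasDerivWithinAt (fun t => √(r ^ 2 - t ^ 2)) (-(t / √(r ^ 2 - t ^ 2))) (Set.Ioo 0 r) t := by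
    convert ((hasDerivAt_pow 2 t).hasDerivWithinAt.const_sub (r ^ 2)).sqrt (hpos ht).ne' using 1
    simp only [Nat.cast_ofNat, Nat.add_one_sub_one, pow_one]
    ring
  conv_rhs => rw [← himage]
  rw [lintegral_image_eq_lintegral_abs_deriv_mul measurableSet_Ioo hderiv
    (Set.LeftInvOn.injOn (f₁' := fun t => √(r ^ 2 - t ^ 2)) fun _ => hinvol)]
  refine setLIntegral_congr_fun measurableSet_Ioo fun t ht => ?_
  have hsqrt : 0 < √(r ^ 2 - t ^ 2) := (hmaps ht).1
  rw [← mul_assoc, ← ENNReal.ofReal_mul (abs_nonneg _), abs_neg,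
    abs_of_pos (div_pos ht.1 hsqrt), div_mul_cancel₀ _ hsqrt.ne']

theorem lintegral_comp_sq_add_sq {f : ℝ → ℝ≥0∞} (hf : Measurable f) :
    ∫⁻ y : ℝ × ℝ, f (y.1 ^ 2 + y.2 ^ 2) = ENNReal.ofReal π * ∫⁻ s in Set.Ioi 0, f s := by
  have hpolar (p : ℝ × ℝ) :
      (polarCoord.symm p).1 ^ 2 + (polarCoord.symm p).2 ^ 2 = p.1 ^ 2 := by
    simp only [polarCoord_symm_apply]
    linear_combination p.1 ^ 2 * sin_sq_add_cos_sq p.2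
  calc ∫⁻ y : ℝ × ℝ, f (y.1 ^ 2 + y.2 ^ 2)
      = ∫⁻ p in Set.Ioi (0 : ℝ) ×ˢ Set.Ioo (-π) π, ENNReal.ofReal p.1 * f (p.1 ^ 2) * 1 := by
        rw [← lintegral_comp_polarCoord_symm]
        simp only [hpolar, polarCoord_target, smul_eq_mul, mul_one]
    _ = (∫⁻ ρ in Set.Ioi (0 : ℝ), ENNReal.ofReal ρ * f (ρ ^ 2)) * ENNReal.ofReal (2 * π) := by
        rw [Measure.volume_eq_prod, ← Measure.prod_restrict,
          lintegral_prod_mul (f := fun ρ => ENNReal.ofReal ρ * f (ρ ^ 2)) (g := fun _ => 1)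
            (by fun_prop) (by fun_prop), lintegral_one, Measure.restrict_apply_univ,
          Real.volume_Ioo, sub_neg_eq_add, two_mul]
    _ = ENNReal.ofReal π * ∫⁻ s in Set.Ioi 0, f s := by
        rw [← lintegral_Ioi_comp_sq_sub_sq le_rfl f, mul_comm, mul_comm 2 π,
          ENNReal.ofReal_mul pi_pos.le, mul_assoc,
          ← lintegral_const_mul' _ _ ENNReal.ofReal_ne_top]
        simp [ENNReal.ofReal_mul, mul_assoc]

theorem lintegral_Ioi_mul_comp_div {ε : ℝ} (hε : 0 < ε) (f : ℝ → ℝ≥0∞) :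
    ∫⁻ t in Set.Ioi 0, ENNReal.ofReal t * f (t / ε) =
      ENNReal.ofReal (ε ^ 2) * ∫⁻ t in Set.Ioi 0, ENNReal.ofReal t * f t := by
  have himage : (fun t => ε * t) '' Set.Ioi 0 = Set.Ioi 0 := by
    rw [Set.image_mul_left_Ioi hε, mul_zero]
  conv_lhs => rw [← himage]
  rw [lintegral_image_const_mul hε.ne' measurableSet_Ioi, abs_of_pos hε, sq,
    ENNReal.ofReal_mul hε.le, mul_assoc]
  congr 1
  rw [← lintegral_const_mul' _ _ ENNReal.ofReal_ne_top]
  refine lintegral_congr fun t => ?_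
  rw [mul_div_cancel_left₀ _ hε.ne', ENNReal.ofReal_mul hε.le, mul_assoc]

/-! ### Integration over the unit sphere -/

section Sphere

variable {E : Type*} [NormedAddCommGroup E] [NormedSpace ℝ E] [MeasurableSpace E] [BorelSpace E]

theorem toSphere_preimage_coe (μ : Measure E) {t : Set E} (ht : MeasurableSet t) :
    μ.toSphere ((↑) ⁻¹' t) =
      Module.finrank ℝ E * μ (norm ⁻¹' Set.Ioo 0 1 ∩ (fun x => ‖x‖⁻¹ • x) ⁻¹' t) := by
  rw [Measure.toSphere_apply' _ (measurable_subtype_coe ht), Subtype.image_preimage_coe]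
  congr 2
  ext x
  simp only [Set.mem_smul, Set.mem_inter_iff, mem_sphere_zero_iff_norm, Set.mem_preimage]
  constructor
  · rintro ⟨c, hc, y, ⟨hy, hyt⟩, rfl⟩
    have hnorm : ‖c • y‖ = c := by rw [norm_smul, hy, mul_one, norm_of_nonneg hc.1.le]
    rw [hnorm, inv_smul_smul₀ hc.1.ne']
    exact ⟨hc, hyt⟩
  · rintro ⟨hx, hxt⟩
    have hx0 : ‖x‖ ≠ 0 := hx.1.ne'
    exact ⟨‖x‖, hx, ‖x‖⁻¹ • x, ⟨by rw [norm_smul, norm_inv, norm_norm, inv_mul_cancel₀ hx0], hxt⟩,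
      smul_inv_smul₀ hx0 x⟩

/-- The restriction of a linear isometry to the unit sphere. -/
def sphereIsometry (R : E ≃ₗᵢ[ℝ] E) (ω : Metric.sphere (0 : E) 1) : Metric.sphere (0 : E) 1 :=
  ⟨R ω, by simp⟩

theorem measurePreserving_sphereIsometry {μ : Measure E} {R : E ≃ₗᵢ[ℝ] E}
    (hR : MeasurePreserving R μ μ) :
    MeasurePreserving (sphereIsometry R) μ.toSphere μ.toSphere := by
  have hm : Measurable (sphereIsometry R) :=
    (hR.measurable.comp measurable_subtype_coe).subtype_mk
  refine ⟨hm, Measure.ext fun s hs => ?_⟩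
  obtain ⟨t, ht, rfl⟩ := hs
  have hpre : sphereIsometry R ⁻¹' ((↑) ⁻¹' t) = (↑) ⁻¹' (R ⁻¹' t) := rfl
  have hcone : norm ⁻¹' Set.Ioo 0 1 ∩ (fun x => ‖x‖⁻¹ • x) ⁻¹' (R ⁻¹' t) =
      R ⁻¹' (norm ⁻¹' Set.Ioo 0 1 ∩ (fun x => ‖x‖⁻¹ • x) ⁻¹' t) := by
    ext x
    simp only [Set.mem_inter_iff, Set.mem_preimage, map_smul, LinearIsometryEquiv.norm_map]
  rw [Measure.map_apply hm (measurable_subtype_coe ht), hpre,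
    toSphere_preimage_coe _ (hR.measurable ht), toSphere_preimage_coe _ ht, hcone,
    hR.measure_preimage_emb R.toHomeomorph.measurableEmbedding]

end Sphere

section AxialIntegration

variable {E : Type*} [NormedAddCommGroup E] [InnerProductSpace ℝ E] [FiniteDimensional ℝ E]
  [MeasurableSpace E] [BorelSpace E]

theorem lintegral_comp_inner_norm_eq_lintegral_prod (hE : Module.finrank ℝ E = 3) {e : E}
    (he : ‖e‖ = 1) {F : ℝ → ℝ → ℝ≥0∞} (hF : Measurable (Function.uncurry F)) :
    ∫⁻ x : E, F ⟪e, x⟫ ‖x‖ =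
      ∫⁻ a : ℝ, ∫⁻ y : ℝ × ℝ, F a √(a ^ 2 + (y.1 ^ 2 + y.2 ^ 2)) := by
  obtain ⟨b, hb⟩ := Orthonormal.exists_orthonormalBasis_extension_of_card_eq (𝕜 := ℝ)
    (ι := Fin 3) (by simp [hE]) (v := fun _ => e) (s := {0}) <| by
      refine ⟨fun _ => he, fun i j hij => ?_⟩
      exact (hij (Subsingleton.elim i j)).elim
  have hb0 : b 0 = e := hb 0 rfl
  have hcoord (x : E) : F ⟪e, x⟫ ‖x‖ = F (b.repr x 0) ‖b.repr x‖ := by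
    rw [b.repr_apply_apply, hb0, LinearIsometryEquiv.norm_map]
  have hmeas : Measurable fun x : EuclideanSpace ℝ (Fin 3) => F (x 0) ‖x‖ :=
    hF.comp (Measurable.prodMk (by fun_prop) (by fun_prop))
  simp_rw [hcoord]
  rw [b.measurePreserving_repr.lintegral_comp hmeas,
    ← (EuclideanSpace.volume_preserving_symm_measurableEquiv_toLp
      (Fin 3)).symm.lintegral_comp hmeas,
    ← (volume_preserving_piFinSuccAbove (fun _ : Fin 3 => ℝ) 0).symm.lintegral_comp_emb
      (MeasurableEquiv.measurableEmbedding _),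
    Measure.volume_eq_prod, lintegral_prod]
  swap
  · exact (hmeas.comp
      ((MeasurableEquiv.measurable _).comp (MeasurableEquiv.measurable _))).aemeasurable
  refine lintegral_congr fun a => ?_
  rw [← (volume_preserving_finTwoArrow ℝ).symm.lintegral_comp_emb
    (MeasurableEquiv.measurableEmbedding _)]
  refine lintegral_congr fun y => ?_
  simp [EuclideanSpace.norm_eq, Fin.sum_univ_three, MeasurableEquiv.piFinSuccAbove, add_assoc]

theorem lintegral_lintegral_Ioi_abs_swap {F : ℝ → ℝ → ℝ≥0∞} (hF : Measurable (Function.uncurry F)) :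
    ∫⁻ a : ℝ, ∫⁻ n in Set.Ioi |a|, F a n = ∫⁻ n in Set.Ioi 0, ∫⁻ a in Set.Ioo (-n) n, F a n := by
  let cone : Set (ℝ × ℝ) := {p | |p.1| < p.2}
  have hcone : Measurable (cone.indicator (Function.uncurry F)) :=
    hF.indicator (measurableSet_lt (by fun_prop) (by fun_prop))
  have hleft (a : ℝ) : ∫⁻ n in Set.Ioi |a|, F a n =
      ∫⁻ n, cone.indicator (Function.uncurry F) (a, n) := by
    rw [← lintegral_indicator measurableSet_Ioi]
    rfl
  have hright (n : ℝ) : ∫⁻ a, cone.indicator (Function.uncurry F) (a, n) =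
      (Set.Ioi 0).indicator (fun n => ∫⁻ a in Set.Ioo (-n) n, F a n) n := by
    by_cases hn : 0 < n
    · rw [Set.indicator_of_mem (Set.mem_Ioi.2 hn), ← lintegral_indicator measurableSet_Ioo]
      exact lintegral_congr fun a =>
        Set.indicator_eq_indicator (show |a| < n ↔ a ∈ Set.Ioo (-n) n from abs_lt) rfl
    · rw [Set.indicator_of_notMem (mt Set.mem_Ioi.1 hn)]
      have hempty (a : ℝ) : (a, n) ∉ cone := fun h => hn ((abs_nonneg a).trans_lt h)
      simp [hempty]
  simp_rw [hleft]
  rw [lintegral_lintegral_swap (f := fun a n => cone.indicator (Function.uncurry F) (a, n))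
    hcone.aemeasurable, ← lintegral_indicator measurableSet_Ioi]
  simp_rw [hright]

theorem lintegral_comp_inner_norm (hE : Module.finrank ℝ E = 3) {e : E} (he : ‖e‖ = 1)
    {F : ℝ → ℝ → ℝ≥0∞} (hF : Measurable (Function.uncurry F)) :
    ∫⁻ x : E, F ⟪e, x⟫ ‖x‖ = ENNReal.ofReal (2 * π) *
      ∫⁻ n in Set.Ioi 0, ENNReal.ofReal n * ∫⁻ a in Set.Ioo (-n) n, F a n := by
  have hslice (a : ℝ) : ∫⁻ y : ℝ × ℝ, F a √(a ^ 2 + (y.1 ^ 2 + y.2 ^ 2)) =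
      ENNReal.ofReal (2 * π) * ∫⁻ n in Set.Ioi |a|, ENNReal.ofReal n * F a n := by
    have hmeas : Measurable fun s => F a √(a ^ 2 + s) :=
      hF.comp (Measurable.prodMk (by fun_prop) (by fun_prop))
    rw [lintegral_comp_sq_add_sq hmeas, ← lintegral_Ioi_comp_sq_sub_sq (abs_nonneg a), mul_comm 2 π,
      ENNReal.ofReal_mul pi_pos.le, mul_assoc]
    congr 1
    rw [← lintegral_const_mul' _ _ ENNReal.ofReal_ne_top]
    refine setLIntegral_congr_fun measurableSet_Ioi fun n (hn : |a| < n) => ?_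
    rw [sq_abs, add_sub_cancel, sqrt_sq ((abs_nonneg a).trans hn.le),
      ENNReal.ofReal_mul zero_le_two, mul_assoc]
  rw [lintegral_comp_inner_norm_eq_lintegral_prod hE he hF]
  simp_rw [hslice]
  rw [lintegral_const_mul' _ _ ENNReal.ofReal_ne_top, lintegral_lintegral_Ioi_abs_swap
    (F := fun a n => ENNReal.ofReal n * F a n)
    ((ENNReal.measurable_ofReal.comp measurable_snd).mul hF)]
  simp_rw [lintegral_const_mul' _ _ ENNReal.ofReal_ne_top]

theorem lintegral_Ioo_ofReal_sq :
    ∫⁻ n in Set.Ioo (0 : ℝ) 1, ENNReal.ofReal (n ^ 2) = ENNReal.ofReal (1 / 3) := by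
  rw [restrict_Ioo_eq_restrict_Ioc,
    ← ofReal_integral_eq_lintegral_ofReal (intervalIntegral.intervalIntegrable_pow 2).1
      (ae_of_all _ fun n => sq_nonneg n), ← intervalIntegral.integral_of_le zero_le_one]
  norm_num

theorem lintegral_Ioo_indicator_comp_mul {r n : ℝ} (hr : 0 < r) (hn : 0 < n) {A : Set ℝ}
    (hA : MeasurableSet A) :
    ∫⁻ a in Set.Ioo (-n) n, A.indicator 1 (r / n * a) =
      ENNReal.ofReal (n / r) * volume.restrict (Set.Ioo (-r) r) A := by
  have himage : (fun t => n / r * t) '' Set.Ioo (-r) r = Set.Ioo (-n) n := by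
    rw [Set.image_mul_left_Ioo (div_pos hn hr)]
    congr 1 <;> field_simp
  rw [← himage, lintegral_image_const_mul (div_pos hn hr).ne' measurableSet_Ioo,
    abs_of_pos (div_pos hn hr), ← lintegral_indicator_one hA]
  congr 2 with t
  congr 1
  field_simp

theorem map_inner_toSphere_apply (μ : Measure E) (z : E) {A : Set ℝ} (hA : MeasurableSet A) :
    μ.toSphere.map (fun ω : Metric.sphere (0 : E) 1 => ⟪z, (ω : E)⟫) A =
      Module.finrank ℝ E * ∫⁻ x : E, (Set.Ioo 0 1).indicator 1 ‖x‖ *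
        A.indicator 1 (‖z‖ / ‖x‖ * ⟪‖z‖⁻¹ • z, x⟫) ∂μ := by
  have hinner : Measurable fun x : E => ⟪z, x⟫ := by fun_prop
  have hdir : Measurable fun x : E => ‖x‖⁻¹ • x := by fun_prop
  have hpre : (fun ω : Metric.sphere (0 : E) 1 => ⟪z, (ω : E)⟫) ⁻¹' A =
      (↑) ⁻¹' ((fun x => ⟪z, x⟫) ⁻¹' A) := rfl
  rw [Measure.map_apply (by fun_prop) hA, hpre, toSphere_preimage_coe _ (hinner hA),
    ← lintegral_indicator_one ((measurableSet_Ioo.preimage measurable_norm).inter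
      (hdir (hinner hA))), Set.inter_indicator_one]
  congr 2 with x
  have hscale : ⟪z, ‖x‖⁻¹ • x⟫ = ‖z‖ / ‖x‖ * ⟪‖z‖⁻¹ • z, x⟫ := by
    obtain rfl | hz := eq_or_ne z 0
    · simp
    · have := norm_ne_zero_iff.2 hz
      rw [real_inner_smul_left, real_inner_smul_right]
      field_simp
  rw [← hscale]
  rfl

theorem map_inner_toSphere (hE : Module.finrank ℝ E = 3) {z : E} (hz : z ≠ 0) :
    (volume : Measure E).toSphere.map (fun ω : Metric.sphere (0 : E) 1 => ⟪z, (ω : E)⟫) =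
      ENNReal.ofReal (2 * π / ‖z‖) • volume.restrict (Set.Ioo (-‖z‖) ‖z‖) := by
  have hr : 0 < ‖z‖ := norm_pos_iff.2 hz
  ext A hA
  let F : ℝ → ℝ → ℝ≥0∞ := fun a n =>
    (Set.Ioo 0 1).indicator 1 n * A.indicator 1 (‖z‖ / n * a)
  have hF : Measurable (Function.uncurry F) :=
    ((measurable_one.indicator measurableSet_Ioo).comp measurable_snd).mul
      ((measurable_one.indicator hA).comp (by fun_prop))
  have hslice (n : ℝ) : (Set.Ioi 0).indicator
      (fun n => ENNReal.ofReal n * ∫⁻ a in Set.Ioo (-n) n, F a n) n =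
      (Set.Ioo 0 1).indicator (fun n => ENNReal.ofReal ‖z‖⁻¹ *
        volume.restrict (Set.Ioo (-‖z‖) ‖z‖) A * ENNReal.ofReal (n ^ 2)) n := by
    by_cases hn : n ∈ Set.Ioo 0 1
    · have hn0 : 0 < n := hn.1
      simp only [F, Set.indicator_of_mem hn, Set.indicator_of_mem (Set.mem_Ioi.2 hn0),
        Pi.one_apply, one_mul, lintegral_Ioo_indicator_comp_mul hr hn0 hA]
      rw [div_eq_mul_inv, ENNReal.ofReal_mul hn0.le, sq, ENNReal.ofReal_mul hn0.le]
      ring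
    · simp [F, hn]
  have hunit : ‖‖z‖⁻¹ • z‖ = 1 := norm_smul_inv_norm (𝕜 := ℝ) hz
  have haxial : ∫⁻ x : E, F ⟪‖z‖⁻¹ • z, x⟫ ‖x‖ = ENNReal.ofReal (2 * π) *
      (ENNReal.ofReal ‖z‖⁻¹ * volume.restrict (Set.Ioo (-‖z‖) ‖z‖) A * ENNReal.ofReal (1 / 3)) := by
    rw [lintegral_comp_inner_norm hE hunit hF,
      ← lintegral_indicator measurableSet_Ioi, lintegral_congr hslice,
      lintegral_indicator measurableSet_Ioo, lintegral_const_mul _ (by fun_prop),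
      lintegral_Ioo_ofReal_sq]
  have hconst : ENNReal.ofReal 3 * ENNReal.ofReal (2 * π) * ENNReal.ofReal ‖z‖⁻¹ *
      ENNReal.ofReal (1 / 3) = ENNReal.ofReal (2 * π / ‖z‖) := by
    rw [← ENNReal.ofReal_mul (by positivity), ← ENNReal.ofReal_mul (by positivity),
      ← ENNReal.ofReal_mul (by positivity)]
    congr 1
    ring
  rw [map_inner_toSphere_apply _ _ hA, hE, Measure.smul_apply, smul_eq_mul, ← hconst,
    ENNReal.ofReal_ofNat, Nat.cast_ofNat]
  refine (congrArg (3 * ·) haxial).trans ?_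
  ring

end AxialIntegration

/-! ### The transferred velocity -/

section CollisionDiff

variable {E : Type*} [AddCommGroup E]

/-- The increment of `ψ` over the two particles when the velocity `p` is transferred from `v` to
`w`; for `p = transfer (v − w) ω` it is `ψ(v') + ψ(v'_*) − ψ(v) − ψ(v_*)`. -/
def collisionDiff (ψ : E → ℝ) (v w p : E) : ℝ := ψ (v - p) + ψ (w + p) - ψ v - ψ w

theorem collisionDiff_sub (ψ : E → ℝ) (v w p : E) :
    collisionDiff ψ v w (v - w - p) = collisionDiff ψ v w p := by
  have hv : v - (v - w - p) = w + p := by abel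
  have hw : w + (v - w - p) = v - p := by abel
  rw [collisionDiff, collisionDiff, hv, hw, add_comm (ψ (w + p))]

end CollisionDiff

section Collision

variable {E : Type*} [NormedAddCommGroup E] [InnerProductSpace ℝ E]

/-- The velocity `(z·ω)ω` transferred in a collision of relative velocity `z` with parameter `ω`:
`v' = v − transfer (v − v_*) ω` and `v'_* = v_* + transfer (v − v_*) ω`. -/
def transfer (z ω : E) : E := ⟪z, ω⟫ • ω

theorem norm_transfer (z : E) {ω : E} (hω : ‖ω‖ = 1) : ‖transfer z ω‖ = |⟪z, ω⟫| := by
  rw [transfer, norm_smul, hω, mul_one, norm_eq_abs]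

theorem inner_transfer (z : E) {ω : E} (hω : ‖ω‖ = 1) :
    ⟪z, transfer z ω⟫ = ‖transfer z ω‖ ^ 2 := by
  rw [norm_transfer z hω, sq_abs, transfer, real_inner_smul_right, sq]

theorem inner_sub_eq_norm_sq {z p : E} (hp : ⟪z, p⟫ = ‖p‖ ^ 2) : ⟪z, z - p⟫ = ‖z - p‖ ^ 2 := by
  rw [norm_sub_sq_real, inner_sub_right, real_inner_self_eq_norm_sq, hp]
  ring

theorem norm_sub_transfer (z : E) {ω : E} (hω : ‖ω‖ = 1) :
    ‖z - transfer z ω‖ = √(‖z‖ ^ 2 - |⟪z, ω⟫| ^ 2) := by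
  rw [← norm_transfer z hω, ← sqrt_sq (norm_nonneg (z - transfer z ω)), norm_sub_sq_real,
    inner_transfer z hω]
  congr 1
  ring

theorem inner_reflection_span_singleton (z x : E) : ⟪z, (ℝ ∙ z).reflection x⟫ = ⟪z, x⟫ := by
  have hfix : (ℝ ∙ z).reflection z = z :=
    Submodule.reflection_mem_subspace_eq_self (Submodule.mem_span_singleton_self z)
  calc ⟪z, (ℝ ∙ z).reflection x⟫ = ⟪(ℝ ∙ z).reflection z, (ℝ ∙ z).reflection x⟫ := by rw [hfix]
    _ = ⟪z, x⟫ := LinearIsometryEquiv.inner_map_map _ z x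

theorem transfer_reflection (z ω : E) :
    transfer z ((ℝ ∙ z).reflection ω) = (ℝ ∙ z).reflection (transfer z ω) := by
  rw [transfer, transfer, inner_reflection_span_singleton, map_smul]

theorem norm_mul_norm_add_reflection_le {z p : E} (hp : ⟪z, p⟫ = ‖p‖ ^ 2) :
    ‖z‖ * ‖p + (ℝ ∙ z).reflection p‖ ≤ 2 * ‖p‖ ^ 2 := by
  obtain rfl | hz := eq_or_ne z 0
  · simp
  · have hz' : ‖z‖ ≠ 0 := norm_ne_zero_iff.2 hz
    rw [Submodule.reflection_singleton_apply, add_sub_cancel, hp, two_smul, ← two_smul ℝ, norm_smul,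
      norm_smul, Real.norm_two, RCLike.ofReal_real_eq_id, id, norm_of_nonneg (by positivity)]
    exact le_of_eq (by field_simp)

variable {ψ : E → ℝ} {K : ℝ≥0}

theorem abs_collisionDiff_add_reflection_le_norm_sq (hψ : Differentiable ℝ ψ)
    (hK : LipschitzWith K (fderiv ℝ ψ)) {v w p : E} (hp : ⟪v - w, p⟫ = ‖p‖ ^ 2) :
    |collisionDiff ψ v w p + collisionDiff ψ v w ((ℝ ∙ (v - w)).reflection p)| ≤
      6 * K * ‖p‖ ^ 2 := by
  set q := (ℝ ∙ (v - w)).reflection p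
  have hqp : ‖q‖ = ‖p‖ := LinearIsometryEquiv.norm_map _ p
  have hvp := norm_sub_sub_fderiv_le_of_lipschitzWith hψ hK v (-p)
  have hvq := norm_sub_sub_fderiv_le_of_lipschitzWith hψ hK v (-q)
  have hwp := norm_sub_sub_fderiv_le_of_lipschitzWith hψ hK w p
  have hwq := norm_sub_sub_fderiv_le_of_lipschitzWith hψ hK w q
  have hpq : |(fderiv ℝ ψ v - fderiv ℝ ψ w) (p + q)| ≤ 2 * (K * ‖p‖ ^ 2) :=
    calc |(fderiv ℝ ψ v - fderiv ℝ ψ w) (p + q)|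
        ≤ ‖fderiv ℝ ψ v - fderiv ℝ ψ w‖ * ‖p + q‖ := by
          rw [← norm_eq_abs]; exact ContinuousLinearMap.le_opNorm _ _
      _ ≤ K * ‖v - w‖ * ‖p + q‖ := by gcongr; exact hK.norm_sub_le v w
      _ = K * (‖v - w‖ * ‖p + q‖) := mul_assoc _ _ _
      _ ≤ K * (2 * ‖p‖ ^ 2) :=
          mul_le_mul_of_nonneg_left (norm_mul_norm_add_reflection_le hp) K.coe_nonneg
      _ = 2 * (K * ‖p‖ ^ 2) := mul_left_comm _ _ _
  simp only [norm_neg, hqp, ← sub_eq_add_neg, map_neg, map_add, sub_apply, norm_eq_abs, abs_le]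
    at hvp hvq hwp hwq hpq
  rw [collisionDiff, collisionDiff, abs_le]
  constructor <;> linarith

theorem abs_collisionDiff_add_reflection_le_norm_sub_sq (hψ : Differentiable ℝ ψ)
    (hK : LipschitzWith K (fderiv ℝ ψ)) {v w p : E} (hp : ⟪v - w, p⟫ = ‖p‖ ^ 2) :
    |collisionDiff ψ v w p + collisionDiff ψ v w ((ℝ ∙ (v - w)).reflection p)| ≤
      6 * K * ‖v - w - p‖ ^ 2 := by
  have hfix : (ℝ ∙ (v - w)).reflection (v - w) = v - w :=
    Submodule.reflection_mem_subspace_eq_self (Submodule.mem_span_singleton_self _)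
  have h := abs_collisionDiff_add_reflection_le_norm_sq hψ hK (inner_sub_eq_norm_sq hp)
  rwa [map_sub, hfix, collisionDiff_sub, collisionDiff_sub] at h

end Collision

section TransferIntegral

variable {E : Type*} [NormedAddCommGroup E] [InnerProductSpace ℝ E] [FiniteDimensional ℝ E]
  [MeasurableSpace E] [BorelSpace E] {z : E} {f : ℝ → ℝ≥0∞}

theorem lintegral_toSphere_comp_abs_inner (hE : Module.finrank ℝ E = 3) (hz : z ≠ 0)
    (hf : Measurable f) :
    ∫⁻ ω : Metric.sphere (0 : E) 1, f |⟪z, (ω : E)⟫| ∂(volume : Measure E).toSphere =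
      ENNReal.ofReal (4 * π / ‖z‖) * ∫⁻ t in Set.Ioo 0 ‖z‖, f t := by
  rw [← lintegral_map (f := fun t => f |t|) (g := fun ω : Metric.sphere (0 : E) 1 => ⟪z, (ω : E)⟫)
      (hf.comp measurable_abs) (by fun_prop), map_inner_toSphere hE hz, lintegral_smul_measure,
    lintegral_Ioo_neg_abs (norm_pos_iff.2 hz), smul_eq_mul, ← mul_assoc, ← ENNReal.ofReal_ofNat 2,
    ← ENNReal.ofReal_mul (by positivity)]
  congr 2
  ring

theorem lintegral_toSphere_norm_transfer_mul_comp_norm_transfer (hE : Module.finrank ℝ E = 3)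
    (hz : z ≠ 0) (hf : Measurable f) :
    ∫⁻ ω : Metric.sphere (0 : E) 1, ENNReal.ofReal ‖transfer z (ω : E)‖ * f ‖transfer z (ω : E)‖
        ∂(volume : Measure E).toSphere =
      ENNReal.ofReal (4 * π / ‖z‖) * ∫⁻ t in Set.Ioo 0 ‖z‖, ENNReal.ofReal t * f t := by
  rw [← lintegral_toSphere_comp_abs_inner hE hz (f := fun t => ENNReal.ofReal t * f t)
    (by fun_prop)]
  exact lintegral_congr fun ω => by rw [norm_transfer z (norm_eq_of_mem_sphere ω)]

theorem lintegral_toSphere_norm_transfer_mul_comp_norm_sub_transfer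
    (hE : Module.finrank ℝ E = 3) (hz : z ≠ 0) (hf : Measurable f) :
    ∫⁻ ω : Metric.sphere (0 : E) 1, ENNReal.ofReal ‖transfer z (ω : E)‖ *
        f ‖z - transfer z (ω : E)‖ ∂(volume : Measure E).toSphere =
      ENNReal.ofReal (4 * π / ‖z‖) * ∫⁻ t in Set.Ioo 0 ‖z‖, ENNReal.ofReal t * f t := by
  rw [← lintegral_Ioo_mul_comp_sqrt_sq_sub_sq, ← lintegral_toSphere_comp_abs_inner hE hz
    (f := fun t => ENNReal.ofReal t * f √(‖z‖ ^ 2 - t ^ 2)) (by fun_prop)]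
  exact lintegral_congr fun ω => by
    rw [norm_transfer z (norm_eq_of_mem_sphere ω), norm_sub_transfer z (norm_eq_of_mem_sphere ω)]

theorem lintegral_toSphere_norm_transfer_mul_add_le (hE : Module.finrank ℝ E = 3) (hz : z ≠ 0)
    (hf : Measurable f) {ε : ℝ} (hε : 0 < ε) :
    ∫⁻ ω : Metric.sphere (0 : E) 1, ENNReal.ofReal ‖transfer z (ω : E)‖ *
        (f (‖transfer z (ω : E)‖ / ε) + f (‖z - transfer z (ω : E)‖ / ε))
        ∂(volume : Measure E).toSphere ≤
      ENNReal.ofReal (8 * π * ε ^ 2 / ‖z‖) * ∫⁻ t in Set.Ioi 0, ENNReal.ofReal t * f t := by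
  have hfε : Measurable fun t => f (t / ε) := by fun_prop
  have hmono : ∫⁻ t in Set.Ioo 0 ‖z‖, ENNReal.ofReal t * f (t / ε) ≤
      ENNReal.ofReal (ε ^ 2) * ∫⁻ t in Set.Ioi 0, ENNReal.ofReal t * f t := by
    rw [← lintegral_Ioi_mul_comp_div hε]
    exact lintegral_mono_set Set.Ioo_subset_Ioi_self
  simp_rw [mul_add]
  rw [lintegral_add_left (by unfold transfer; fun_prop),
    lintegral_toSphere_norm_transfer_mul_comp_norm_transfer hE hz hfε,
    lintegral_toSphere_norm_transfer_mul_comp_norm_sub_transfer hE hz hfε, ← add_mul,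
    ← ENNReal.ofReal_add (by positivity) (by positivity)]
  refine (mul_le_mul_right hmono _).trans_eq ?_
  rw [← mul_assoc, ← ENNReal.ofReal_mul (by positivity)]
  congr 2
  ring

end TransferIntegral

/-! ### The collision kernel -/

theorem enorm_integral_le_lintegral_enorm_add_comp {α F : Type*} [MeasurableSpace α]
    [NormedAddCommGroup F] [NormedSpace ℝ F] {μ : Measure α} {T : α → α}
    (hT : MeasurePreserving T μ μ) (f : α → F) :
    ‖∫ x, f x ∂μ‖ₑ ≤ ENNReal.ofReal (1 / 2) * ∫⁻ x, ‖f x + f (T x)‖ₑ ∂μ := by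
  by_cases hf : Integrable f μ
  · have hfT : Integrable (fun x => f (T x)) μ := hT.integrable_comp_of_integrable hf
    have hmap : ∫ x, f (T x) ∂μ = ∫ x, f x ∂μ := by
      conv_rhs => rw [← hT.map_eq]
      exact (integral_map hT.aemeasurable (by rw [hT.map_eq]; exact hf.aestronglyMeasurable)).symm
    have hsymm : ∫ x, f x ∂μ = (1 / 2 : ℝ) • ∫ x, f x + f (T x) ∂μ := by
      rw [integral_add hf hfT, hmap]
      module
    rw [hsymm, enorm_smul, Real.enorm_eq_ofReal one_half_pos.le]
    gcongr
    exact enorm_integral_le_lintegral_enorm _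
  · simp [integral_undef hf]

section CollisionKernel

variable (φh : ℝ → ℝ) (lam ε : ℝ) (v w : E3)

theorem sub_vPost (ω : E3) : v - vPost v w ω = transfer (v - w) ω := sub_sub_cancel _ _

theorem sub_vPostStar (ω : E3) : v - vPostStar v w ω = v - w - transfer (v - w) ω := by
  rw [vPostStar, sub_add_eq_sub_sub, transfer]

theorem Bker_reflection (ω : E3) :
    Bker φh lam ε v w ((ℝ ∙ (v - w)).reflection ω) = Bker φh lam ε v w ω := by
  have hfix : (ℝ ∙ (v - w)).reflection (v - w) = v - w :=
    Submodule.reflection_mem_subspace_eq_self (Submodule.mem_span_singleton_self _)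
  have hpost : ‖transfer (v - w) ((ℝ ∙ (v - w)).reflection ω)‖ = ‖transfer (v - w) ω‖ := by
    rw [transfer_reflection, LinearIsometryEquiv.norm_map]
  have hpostStar : ‖v - w - transfer (v - w) ((ℝ ∙ (v - w)).reflection ω)‖ =
      ‖v - w - transfer (v - w) ω‖ := by
    rw [transfer_reflection]
    nth_rw 1 [← hfix]
    rw [← map_sub, LinearIsometryEquiv.norm_map]
  simp only [Bker, sub_vPost, sub_vPostStar, inner_reflection_span_singleton, hpost, hpostStar]

theorem abs_Bker_le {ω : E3} (hω : ‖ω‖ = 1) :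
    |Bker φh lam ε v w ω| ≤ (1 + lam ^ 2) * (‖transfer (v - w) ω‖ / ε ^ 4 *
      (φh (‖transfer (v - w) ω‖ / ε) ^ 2 + φh (‖v - w - transfer (v - w) ω‖ / ε) ^ 2)) := by
  rw [Bker, sub_vPost, sub_vPostStar, ← norm_transfer _ hω]
  set a := φh (‖transfer (v - w) ω‖ / ε)
  set b := φh (‖v - w - transfer (v - w) ω‖ / ε)
  rw [mul_left_comm]
  split_ifs with h
  · rw [abs_of_nonneg (by positivity), h]
    simp
  · rw [abs_of_nonneg (by positivity)]
    gcongr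
    linarith [sq_nonneg (lam * a - b)]

end CollisionKernel

/-- The integrand `B^ε_λ (ψ(v') + ψ(v'_*) − ψ(v) − ψ(v_*))` of `Leps`. -/
def collisionIntegrand (φh : ℝ → ℝ) (lam ε : ℝ) (ψ : E3 → ℝ) (v w ω : E3) : ℝ :=
  Bker φh lam ε v w ω * collisionDiff ψ v w (transfer (v - w) ω)

theorem Leps_eq_integral_collisionIntegrand (φh : ℝ → ℝ) (lam ε : ℝ) (ψ : E3 → ℝ) (v w : E3) :
    Leps φh lam ε ψ v w = (1 / 2) * ∫ ω : Metric.sphere (0 : E3) 1,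
      collisionIntegrand φh lam ε ψ v w ω ∂(volume : Measure E3).toSphere := rfl

section CollisionIntegral

variable {ψ : E3 → ℝ} {K : ℝ≥0} {φh : ℝ → ℝ} {ε : ℝ} {v w : E3}

theorem abs_collisionIntegrand_add_reflection_le (hψ : Differentiable ℝ ψ)
    (hK : LipschitzWith K (fderiv ℝ ψ)) (φh : ℝ → ℝ) (lam : ℝ) (hε : 0 < ε) (v w : E3)
    {ω : E3} (hω : ‖ω‖ = 1) :
    |collisionIntegrand φh lam ε ψ v w ω +
        collisionIntegrand φh lam ε ψ v w ((ℝ ∙ (v - w)).reflection ω)| ≤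
      6 * K * (1 + lam ^ 2) / ε ^ 2 * (‖transfer (v - w) ω‖ *
        ((‖transfer (v - w) ω‖ / ε * φh (‖transfer (v - w) ω‖ / ε)) ^ 2 +
          (‖v - w - transfer (v - w) ω‖ / ε *
            φh (‖v - w - transfer (v - w) ω‖ / ε)) ^ 2)) := by
  have hp := inner_transfer (v - w) hω
  rw [collisionIntegrand, collisionIntegrand, Bker_reflection, transfer_reflection, ← mul_add,
    abs_mul]
  set p := transfer (v - w) ω
  set D := |collisionDiff ψ v w p + collisionDiff ψ v w ((ℝ ∙ (v - w)).reflection p)|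
  have hDp : D ≤ 6 * K * ‖p‖ ^ 2 := abs_collisionDiff_add_reflection_le_norm_sq hψ hK hp
  have hDq : D ≤ 6 * K * ‖v - w - p‖ ^ 2 :=
    abs_collisionDiff_add_reflection_le_norm_sub_sq hψ hK hp
  calc |Bker φh lam ε v w ω| * D
      ≤ (1 + lam ^ 2) * (‖p‖ / ε ^ 4 * (φh (‖p‖ / ε) ^ 2 + φh (‖v - w - p‖ / ε) ^ 2)) * D := by
        gcongr
        exact abs_Bker_le φh lam ε v w hω
    _ = (1 + lam ^ 2) * (‖p‖ / ε ^ 4 *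
          (φh (‖p‖ / ε) ^ 2 * D + φh (‖v - w - p‖ / ε) ^ 2 * D)) := by ring
    _ ≤ (1 + lam ^ 2) * (‖p‖ / ε ^ 4 * (φh (‖p‖ / ε) ^ 2 * (6 * K * ‖p‖ ^ 2) +
          φh (‖v - w - p‖ / ε) ^ 2 * (6 * K * ‖v - w - p‖ ^ 2))) := by gcongr
    _ = _ := by field_simp

theorem lintegral_enorm_collisionIntegrand_add_reflection_le (hmeas : Measurable φh)
    (hψ : Differentiable ℝ ψ) (hK : LipschitzWith K (fderiv ℝ ψ)) (lam : ℝ) (hε : 0 < ε)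
    (hvw : v ≠ w) :
    ∫⁻ ω : Metric.sphere (0 : E3) 1, ‖collisionIntegrand φh lam ε ψ v w ω +
        collisionIntegrand φh lam ε ψ v w ((ℝ ∙ (v - w)).reflection (ω : E3))‖ₑ
        ∂(volume : Measure E3).toSphere ≤
      ENNReal.ofReal (48 * π * (1 + lam ^ 2) * K / ‖v - w‖) *
        ∫⁻ r in Set.Ioi 0, ENNReal.ofReal (r ^ 3 * φh r ^ 2) := by
  let g : ℝ → ℝ≥0∞ := fun s => ENNReal.ofReal ((s * φh s) ^ 2)
  have hg : Measurable g := by fun_prop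
  have hmoment : ∫⁻ r in Set.Ioi 0, ENNReal.ofReal r * g r =
      ∫⁻ r in Set.Ioi 0, ENNReal.ofReal (r ^ 3 * φh r ^ 2) :=
    setLIntegral_congr_fun measurableSet_Ioi fun r (hr : 0 < r) => by
      rw [← ENNReal.ofReal_mul hr.le]
      congr 1
      ring
  calc _ ≤ ∫⁻ ω : Metric.sphere (0 : E3) 1, ENNReal.ofReal (6 * K * (1 + lam ^ 2) / ε ^ 2) *
        (ENNReal.ofReal ‖transfer (v - w) (ω : E3)‖ *
          (g (‖transfer (v - w) (ω : E3)‖ / ε) +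
            g (‖v - w - transfer (v - w) (ω : E3)‖ / ε))) ∂(volume : Measure E3).toSphere := by
        refine lintegral_mono fun ω => ?_
        rw [← ENNReal.ofReal_add (sq_nonneg _) (sq_nonneg _), ← ENNReal.ofReal_mul (norm_nonneg _),
          ← ENNReal.ofReal_mul (by positivity), ← ofReal_norm, norm_eq_abs]
        exact ENNReal.ofReal_le_ofReal
          (abs_collisionIntegrand_add_reflection_le hψ hK φh lam hε v w (norm_eq_of_mem_sphere ω))
    _ ≤ ENNReal.ofReal (6 * K * (1 + lam ^ 2) / ε ^ 2) *
          (ENNReal.ofReal (8 * π * ε ^ 2 / ‖v - w‖) *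
            ∫⁻ r in Set.Ioi 0, ENNReal.ofReal r * g r) := by
        rw [lintegral_const_mul' _ _ ENNReal.ofReal_ne_top]
        gcongr
        exact lintegral_toSphere_norm_transfer_mul_add_le finrank_euclideanSpace_fin
          (sub_ne_zero.2 hvw) hg hε
    _ = _ := by
        rw [hmoment, ← mul_assoc, ← ENNReal.ofReal_mul (by positivity)]
        congr 2
        field_simp
        ring

theorem enorm_Leps_le (hmeas : Measurable φh) (hψ : Differentiable ℝ ψ)
    (hK : LipschitzWith K (fderiv ℝ ψ)) (lam : ℝ) (hε : 0 < ε) (hvw : v ≠ w) :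
    ‖Leps φh lam ε ψ v w‖ₑ ≤ ENNReal.ofReal (12 * π * (1 + lam ^ 2) * K / ‖v - w‖) *
      ∫⁻ r in Set.Ioi 0, ENNReal.ofReal (r ^ 3 * φh r ^ 2) := by
  have hR := measurePreserving_sphereIsometry (ℝ ∙ (v - w)).reflection.measurePreserving
  calc ‖Leps φh lam ε ψ v w‖ₑ
      = ENNReal.ofReal (1 / 2) * ‖∫ ω : Metric.sphere (0 : E3) 1,
          collisionIntegrand φh lam ε ψ v w ω ∂(volume : Measure E3).toSphere‖ₑ := by
        rw [Leps_eq_integral_collisionIntegrand, enorm_mul, Real.enorm_eq_ofReal one_half_pos.le]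
    _ ≤ ENNReal.ofReal (1 / 2) * (ENNReal.ofReal (1 / 2) *
          (ENNReal.ofReal (48 * π * (1 + lam ^ 2) * K / ‖v - w‖) *
            ∫⁻ r in Set.Ioi 0, ENNReal.ofReal (r ^ 3 * φh r ^ 2))) := by
        gcongr
        refine (enorm_integral_le_lintegral_enorm_add_comp hR _).trans ?_
        gcongr
        exact lintegral_enorm_collisionIntegrand_add_reflection_le hmeas hψ hK lam hε hvw
    _ = _ := by
        simp only [← mul_assoc]
        rw [← ENNReal.ofReal_mul (by positivity), ← ENNReal.ofReal_mul (by positivity)]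
        congr 2
        ring

theorem abs_Leps_le (hmeas : Measurable φh)
    (hint : IntegrableOn (fun r => r ^ 3 * φh r ^ 2) (Set.Ioi 0)) (hψ : Differentiable ℝ ψ)
    (hK : LipschitzWith K (fderiv ℝ ψ)) (lam : ℝ) (hε : 0 < ε) (hvw : v ≠ w) :
    |Leps φh lam ε ψ v w| ≤ 6 * (1 + lam ^ 2) * (2 * π * ∫ r in Set.Ioi 0, r ^ 3 * φh r ^ 2) * K /
      ‖v - w‖ := by
  have hnonneg : 0 ≤ᵐ[volume.restrict (Set.Ioi 0)] fun r => r ^ 3 * φh r ^ 2 :=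
    (ae_restrict_mem measurableSet_Ioi).mono fun r (hr : 0 < r) => by positivity
  have hI := integral_nonneg_of_ae hnonneg
  have h := enorm_Leps_le hmeas hψ hK lam hε hvw
  rw [← ofReal_integral_eq_lintegral_ofReal hint hnonneg, ← ENNReal.ofReal_mul (by positivity),
    ← ofReal_norm, norm_eq_abs, ENNReal.ofReal_le_ofReal_iff (by positivity)] at h
  exact h.trans_eq (by ring)

end CollisionIntegral

/-! ### The Landau kernel -/

theorem abs_trace_le_finrank_mul_norm {E : Type*} [NormedAddCommGroup E] [InnerProductSpace ℝ E]
    [FiniteDimensional ℝ E] (A : E →L[ℝ] E) :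
    |LinearMap.trace ℝ E (A : E →ₗ[ℝ] E)| ≤ Module.finrank ℝ E * ‖A‖ := by
  rw [LinearMap.trace_eq_sum_inner _ (stdOrthonormalBasis ℝ E)]
  have hdiag (i) : |⟪stdOrthonormalBasis ℝ E i, A (stdOrthonormalBasis ℝ E i)⟫| ≤ ‖A‖ := by
    refine (abs_real_inner_le_norm _ _).trans ?_
    simpa using A.le_opNorm (stdOrthonormalBasis ℝ E i)
  refine (Finset.abs_sum_le_sum_abs _ _).trans ((Finset.sum_le_sum fun i _ => hdiag i).trans_eq ?_)
  rw [Finset.sum_const, Finset.card_univ, Fintype.card_fin, nsmul_eq_mul]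

section Divergence

/-- The divergence of a vector field on a real normed space, as the trace of its derivative. It is
`0` by convention where `V` is not differentiable and when `E` is infinite-dimensional. -/
def divergence {E : Type*} [NormedAddCommGroup E] [NormedSpace ℝ E] (V : E → E) (x : E) : ℝ :=
  LinearMap.trace ℝ E (fderiv ℝ V x)

theorem sum_fderiv_apply_single_eq_divergence {ι : Type*} [Fintype ι] [DecidableEq ι]
    {V : EuclideanSpace ℝ ι → EuclideanSpace ℝ ι} {x : EuclideanSpace ℝ ι}
    (hV : DifferentiableAt ℝ V x) :
    ∑ i, fderiv ℝ (fun u => V u i) x (EuclideanSpace.single i 1) = divergence V x := by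
  rw [divergence, LinearMap.trace_eq_sum_inner _ (EuclideanSpace.basisFun ι ℝ)]
  refine Finset.sum_congr rfl fun i _ => ?_
  have hcoord : HasFDerivAt (fun u => V u i) ((EuclideanSpace.proj i).comp (fderiv ℝ V x)) x :=
    (EuclideanSpace.proj (𝕜 := ℝ) i).hasFDerivAt.comp x hV.hasFDerivAt
  rw [hcoord.fderiv]
  simp [EuclideanSpace.inner_single_left]

section NormedSpace

variable {E : Type*} [NormedAddCommGroup E] [NormedSpace ℝ E] {U V : E → E} {x : E}

theorem divergence_sub (hU : DifferentiableAt ℝ U x) (hV : DifferentiableAt ℝ V x) :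
    divergence (fun u => U u - V u) x = divergence U x - divergence V x := by
  simp [divergence, fderiv_fun_sub hU hV]

theorem divergence_smul [FiniteDimensional ℝ E] {q : E → ℝ} (hq : DifferentiableAt ℝ q x)
    (hV : DifferentiableAt ℝ V x) :
    divergence (fun u => q u • V u) x = q x * divergence V x + fderiv ℝ q x (V x) := by
  simp [divergence, fderiv_fun_smul hq hV]

theorem divergence_id_sub_const [FiniteDimensional ℝ E] (w : E) :
    divergence (fun u => u - w) x = Module.finrank ℝ E := by
  simp [divergence, fderiv_sub_const]

end NormedSpace

variable {E : Type*} [NormedAddCommGroup E] [InnerProductSpace ℝ E] {G : E → E} {x w : E}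

theorem differentiableAt_inner_sub_div_norm_sq (hG : DifferentiableAt ℝ G x) (hxw : x ≠ w) :
    DifferentiableAt ℝ (fun u => ⟪u - w, G u⟫ / ‖u - w‖ ^ 2) x := by
  have hsub : DifferentiableAt ℝ (fun u => u - w) x := by fun_prop
  have hz : ‖x - w‖ ≠ 0 := norm_ne_zero_iff.2 (sub_ne_zero.2 hxw)
  exact (hsub.inner ℝ hG).fun_mul ((hsub.norm_sq ℝ).fun_inv (pow_ne_zero 2 hz))

theorem fderiv_inner_sub_div_norm_sq_apply (hG : DifferentiableAt ℝ G x) (hxw : x ≠ w) :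
    fderiv ℝ (fun u => ⟪u - w, G u⟫ / ‖u - w‖ ^ 2) x (x - w) =
      (⟪x - w, fderiv ℝ G x (x - w)⟫ - ⟪x - w, G x⟫) / ‖x - w‖ ^ 2 := by
  have hz : ‖x - w‖ ≠ 0 := norm_ne_zero_iff.2 (sub_ne_zero.2 hxw)
  have hsub : HasFDerivAt (fun u => u - w) (ContinuousLinearMap.id ℝ E) x :=
    (hasFDerivAt_id x).sub_const w
  have hinv := (hasDerivAt_inv (pow_ne_zero 2 hz)).comp_hasFDerivAt x hsub.norm_sq
  have hq := (hsub.inner ℝ hG.hasFDerivAt).fun_mul hinv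
  simp only [Function.comp_def, ← div_eq_mul_inv] at hq
  rw [hq.fderiv]
  simp [-map_sub, -inner_self_eq_norm_sq_to_K, real_inner_self_eq_norm_sq]
  field_simp
  ring

variable [FiniteDimensional ℝ E]

theorem divergence_sub_radial (hG : DifferentiableAt ℝ G x) (hxw : x ≠ w) :
    divergence (fun u => G u - (⟪u - w, G u⟫ / ‖u - w‖ ^ 2) • (u - w)) x =
      divergence G x - ⟪x - w, fderiv ℝ G x (x - w)⟫ / ‖x - w‖ ^ 2 -
        (Module.finrank ℝ E - 1) * (⟪x - w, G x⟫ / ‖x - w‖ ^ 2) := by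
  have hsub : DifferentiableAt ℝ (fun u => u - w) x := by fun_prop
  have hq := differentiableAt_inner_sub_div_norm_sq hG hxw
  rw [divergence_sub hG (hq.fun_smul hsub), divergence_smul hq hsub, divergence_id_sub_const,
    fderiv_inner_sub_div_norm_sq_apply hG hxw]
  ring

theorem abs_divergence_sub_radial_le {K : ℝ≥0} (hG : DifferentiableAt ℝ G x)
    (hK : LipschitzWith K G) (hw : G w = 0) (hxw : x ≠ w) :
    |divergence (fun u => G u - (⟪u - w, G u⟫ / ‖u - w‖ ^ 2) • (u - w)) x| ≤
      2 * Module.finrank ℝ E * K := by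
  have : Nontrivial E := ⟨x, w, hxw⟩
  have hdim : (1 : ℝ) ≤ Module.finrank ℝ E := mod_cast Module.finrank_pos
  have hz : 0 < ‖x - w‖ ^ 2 := pow_pos (norm_sub_pos_iff.2 hxw) 2
  have hG' : ‖fderiv ℝ G x‖ ≤ K := norm_fderiv_le_of_lipschitz ℝ hK
  have hdiv : |divergence G x| ≤ Module.finrank ℝ E * K :=
    (abs_trace_le_finrank_mul_norm _).trans (by gcongr)
  have hquot {y : E} (hy : ‖y‖ ≤ K * ‖x - w‖) : |⟪x - w, y⟫ / ‖x - w‖ ^ 2| ≤ K := by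
    rw [abs_div, abs_of_pos hz, div_le_iff₀ hz]
    calc |⟪x - w, y⟫| ≤ ‖x - w‖ * ‖y‖ := abs_real_inner_le_norm _ _
      _ ≤ ‖x - w‖ * (K * ‖x - w‖) := by gcongr
      _ = K * ‖x - w‖ ^ 2 := by ring
  have hsecond := hquot ((fderiv ℝ G x).le_of_opNorm_le hG' (x - w))
  have hfirst : |⟪x - w, G x⟫ / ‖x - w‖ ^ 2| ≤ K :=
    hquot (by simpa [hw] using hK.norm_sub_le x w)
  rw [divergence_sub_radial hG hxw]
  calc _ ≤ |divergence G x| + |⟪x - w, fderiv ℝ G x (x - w)⟫ / ‖x - w‖ ^ 2| +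
        |(Module.finrank ℝ E - 1) * (⟪x - w, G x⟫ / ‖x - w‖ ^ 2)| :=
        (abs_sub _ _).trans (add_le_add_left (abs_sub _ _) _)
    _ ≤ Module.finrank ℝ E * K + K + (Module.finrank ℝ E - 1) * K := by
        rw [abs_mul, abs_of_nonneg (sub_nonneg.2 hdim)]
        gcongr
    _ = 2 * Module.finrank ℝ E * K := by ring

end Divergence

section Landau

variable {ψ : E3 → ℝ} {K : ℝ≥0}

theorem lipschitzWith_gradient_sub_const (hK : LipschitzWith K (fderiv ℝ ψ)) (w : E3) :
    LipschitzWith K fun u => gradient ψ u - gradient ψ w :=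
  LipschitzWith.of_dist_le_mul fun x y => by
    rw [dist_sub_right, gradient, gradient, LinearIsometryEquiv.dist_map]
    exact hK.dist_le_mul x y

theorem differentiable_gradient (hψ : ContDiff ℝ 2 ψ) : Differentiable ℝ (gradient ψ) := by
  have hD : Differentiable ℝ (fderiv ℝ ψ) :=
    (hψ.fderiv_right (m := 1) (by norm_num)).differentiable one_ne_zero
  exact (InnerProductSpace.toDual ℝ E3).symm.differentiable.comp hD

theorem landauVF_swap (ψ : E3 → ℝ) (v w : E3) : landauVF ψ v w = -landauVF ψ w v := by
  rw [landauVF, landauVF, projPerp, projPerp, ← neg_sub w v,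
    ← neg_sub (gradient ψ w) (gradient ψ v), norm_neg, inner_neg_neg]
  module

theorem differentiableAt_landauVF (hψ : ContDiff ℝ 2 ψ) {v w : E3} (hvw : v ≠ w) :
    DifferentiableAt ℝ (fun u => landauVF ψ u w) v := by
  have hG : DifferentiableAt ℝ (fun u => gradient ψ u - gradient ψ w) v :=
    (differentiable_gradient hψ v).sub_const _
  exact hG.fun_sub ((differentiableAt_inner_sub_div_norm_sq hG hvw).fun_smul (by fun_prop))

theorem Llandau_eq_divergence (hψ : ContDiff ℝ 2 ψ) {v w : E3} (hvw : v ≠ w) :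
    Llandau ψ v w = (1 / (2 * ‖v - w‖)) *
      (divergence (fun u => landauVF ψ u w) v + divergence (fun u => landauVF ψ u v) w) := by
  have hswap (i : Fin 3) : (fun u => landauVF ψ v u i) = fun u => -landauVF ψ u v i :=
    funext fun u => congrArg (· i) (landauVF_swap ψ v u)
  rw [Llandau, ← sum_fderiv_apply_single_eq_divergence (differentiableAt_landauVF hψ hvw),
    ← sum_fderiv_apply_single_eq_divergence (differentiableAt_landauVF hψ hvw.symm),
    ← Finset.sum_add_distrib]
  simp only [hswap, fderiv_fun_neg, neg_apply, sub_neg_eq_add]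

theorem abs_divergence_landauVF_le (hψ : ContDiff ℝ 2 ψ) (hK : LipschitzWith K (fderiv ℝ ψ))
    {v w : E3} (hvw : v ≠ w) : |divergence (fun u => landauVF ψ u w) v| ≤ 6 * K := by
  have h := abs_divergence_sub_radial_le ((differentiable_gradient hψ v).sub_const _)
    (lipschitzWith_gradient_sub_const hK w) (sub_self _) hvw
  rw [finrank_euclideanSpace_fin] at h
  exact h.trans_eq (by norm_num)

theorem abs_Llandau_le (hψ : ContDiff ℝ 2 ψ) (hK : LipschitzWith K (fderiv ℝ ψ))
    {v w : E3} (hvw : v ≠ w) : |Llandau ψ v w| ≤ 6 * K / ‖v - w‖ := by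
  rw [Llandau_eq_divergence hψ hvw, abs_mul, abs_of_nonneg (by positivity)]
  calc _ ≤ 1 / (2 * ‖v - w‖) * (6 * K + 6 * K) := by
        gcongr
        exact (abs_add_le _ _).trans (add_le_add (abs_divergence_landauVF_le hψ hK hvw)
          (abs_divergence_landauVF_le hψ hK hvw.symm))
    _ = 6 * K / ‖v - w‖ := by ring

end Landau

theorem stmt5_general (φh : ℝ → ℝ) (hmeas : Measurable φh)
    (hint : IntegrableOn (fun r => r ^ 3 * φh r ^ 2) (Set.Ioi 0)) (lam : ℝ) (ψ : E3 → ℝ)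
    (hψ : ContDiff ℝ 2 ψ) (hbdd : BddAbove (Set.range fun u => ‖iteratedFDeriv ℝ 2 ψ u‖))
    (v w : E3) (hvw : v ≠ w) :
    (∀ ε : ℝ, 0 < ε → |Leps φh lam ε ψ v w| ≤
      6 * (1 + lam ^ 2) * (2 * π * ∫ r in Set.Ioi 0, r ^ 3 * φh r ^ 2) * hessSupNorm ψ /
        ‖v - w‖) ∧
    |Llandau ψ v w| ≤ 6 * hessSupNorm ψ / ‖v - w‖ :=
  have hK := lipschitzWith_fderiv_hessSupNorm hψ hbdd
  ⟨fun _ hε => abs_Leps_le hmeas hint (hψ.differentiable two_ne_zero) hK lam hε hvw,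
    abs_Llandau_le hψ hK hvw⟩

/-- Under the normalization `2π ∫₀^∞ r³ φ̂(r)² dr = 1`, for `λ ∈ {0,−1,+1}`
and `ψ ∈ C²_c(ℝ³)`, for all `v ≠ v_*` and all `ε > 0`,
`|L^ε_λ[ψ](v,v_*)| ≤ 16‖D²ψ‖_∞/|v−v_*|` and `|L[ψ](v,v_*)| ≤ 16‖D²ψ‖_∞/|v−v_*|`. -/
theorem stmt5 (φh : ℝ → ℝ) (hmeas : Measurable φh)
    (hnorm : 2 * π * ∫ r in Set.Ioi (0 : ℝ), r ^ 3 * (φh r) ^ 2 = 1)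
    (lam : ℝ) (hlam : lam = 0 ∨ lam = -1 ∨ lam = 1)
    (ψ : E3 → ℝ) (hψ : ContDiff ℝ 2 ψ) (hsupp : HasCompactSupport ψ)
    (v w : E3) (hvw : v ≠ w) :
    (∀ ε : ℝ, 0 < ε → |Leps φh lam ε ψ v w| ≤ 16 * hessSupNorm ψ / ‖v - w‖) ∧
    |Llandau ψ v w| ≤ 16 * hessSupNorm ψ / ‖v - w‖ := by
  have hint : IntegrableOn (fun r => r ^ 3 * φh r ^ 2) (Set.Ioi 0) :=
    Integrable.of_integral_ne_zero (right_ne_zero_of_mul (hnorm.trans_ne one_ne_zero))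
  obtain ⟨hLeps, hLandau⟩ := stmt5_general φh hmeas hint lam ψ hψ
    (bddAbove_range_norm_iteratedFDeriv hψ hsupp) v w hvw
  have hlam_sq : lam ^ 2 ≤ 1 := by rcases hlam with rfl | rfl | rfl <;> norm_num
  have hH := hessSupNorm_nonneg ψ
  rw [hnorm] at hLeps
  exact ⟨fun ε hε => (hLeps ε hε).trans (by gcongr; linarith),
    hLandau.trans (by gcongr; norm_num)⟩

end
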